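/- Let N>1 be an integer. Then c(N)=0 if and only if one of the following holds: (1) ω(N) ≤ 3, i.e., N has at most three distinct prime factors; or (2) ω(N) = 4 and N is odd, i.e., N has exactly four distinct prime factors and its smallest prime factor is at least 3. -/

import Mathlib

namespace Paper

noncomputable section

/-- Closed disk attached to a rational `α = a/b` in lowest terms:
center `α`, radius `1/b`. -/
def disk (α : ℚ) : Set ℂ := Metric.closedBall (α : ℂ) (1 / (α.den : ℝ))

/-- The closed disk `D_{a/b}` of radius `1/b` centered at `a/b`. -/
def diskAt (a b : ℕ) : Set ℂ := Metric.closedBall ((a : ℂ) / (b : ℂ)) (1 / (b : ℝ))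

/-- The north pole `P_α = a/b + i/b` of the disk of `α = a/b` in lowest terms. -/
def northPole (α : ℚ) : ℂ := (α : ℂ) + Complex.I / (α.den : ℂ)

/-- Complexity of the north pole of `α` relative to a set `S` of rationals:
the number of `β ∈ S`, `β ≠ α`, whose disk contains `P_α`. -/
def poleComplexity (S : Set ℚ) (α : ℚ) : ℕ :=
  {β ∈ S | β ≠ α ∧ northPole α ∈ disk β}.ncard

/-- Rationals `a/b ∈ [0,1]` in lowest terms with `N ∣ b`. -/
def cand (N : ℕ) : Set ℚ := {α | 0 ≤ α ∧ α ≤ 1 ∧ N ∣ α.den}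

/-- The region `R_N`. -/
def RN (N : ℕ) : Set ℂ := ⋃ α ∈ cand N, disk α

/-- The set `S_N`: those `α` whose disk is not covered by the other disks. -/
def SSet (N : ℕ) : Set ℚ :=
  {α | α ∈ cand N ∧ ¬ disk α ⊆ ⋃ β ∈ cand N \ {α}, disk β}

/-- The complexity `c(N)`: the maximum of the complexities of north poles of `α ∈ S_N`. -/
def cN (N : ℕ) : ℕ := sSup (poleComplexity (SSet N) '' SSet N)

/-!
Multiplication by `N` turns the disk of `a / (N b)` into the disk of radius `1 / b` about `a / b`,
where `a` is coprime to `N b`. Let such a disk be exposed, with `b > 2` and centre in `(m, m + 1)`.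
Then each of `m`, `m + 1`, `2 m + 1` has a common factor with `N`, since otherwise the disk of `m`,
`m + 1` or `m + 1 / 2` would swallow it. A prime dividing both `d m + l` and `d' m + l'` divides the
determinant `l d' - l' d`, so different small fractions are blocked by different primes.

If `N` has at most three prime factors, or is odd with four of them, then blocking `0`, `1`, `1 / 2`
and `2 / 3` uses up all the primes. The remaining small fractions are available, and their disks
swallow every other disk centred in `(m, m + 1)` of radius less than `1 / 2`, except for those of
`1 / 3` and of one of `3 / 4` and `4 / 5`, which avoid each other's poles. The case of `1 / 3` in
place of `2 / 3` is its mirror image, and if neither is blocked only denominator `3` survives.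

Otherwise there are enough primes to block `0`, `1`, `1 / 2`, `1 / 3`, `2 / 3` for some `m` while
keeping `1 / 4` and `2 / 5` available. Both are exposed, and the pole of `2 / 5` lies on the circle
of `1 / 4`.
-/

section Disks

theorem mem_closedBall_ofReal_iff {c r : ℝ} (hr : 0 ≤ r) {z : ℂ} :
    z ∈ Metric.closedBall (c : ℂ) r ↔ (z.re - c) ^ 2 + z.im ^ 2 ≤ r ^ 2 := by
  rw [Metric.mem_closedBall, Complex.dist_eq_re_im, Real.sqrt_le_left hr, Complex.ofReal_re,
    Complex.ofReal_im, sub_zero]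

theorem closedBall_ofReal_subset_union {c c₁ c₂ r r₁ r₂ x₀ : ℝ} (hr₁ : 0 ≤ r₁) (hr₂ : 0 ≤ r₂)
    (hc₁ : c₁ ≤ c) (hc₂ : c ≤ c₂) (h₁ : (x₀ - c₁) ^ 2 - r₁ ^ 2 ≤ (x₀ - c) ^ 2 - r ^ 2)
    (h₂ : (x₀ - c₂) ^ 2 - r₂ ^ 2 ≤ (x₀ - c) ^ 2 - r ^ 2) :
    Metric.closedBall (c : ℂ) r ⊆
      Metric.closedBall (c₁ : ℂ) r₁ ∪ Metric.closedBall (c₂ : ℂ) r₂ := by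
  intro z hz
  rw [mem_closedBall_ofReal_iff (dist_nonneg.trans hz)] at hz
  rw [Set.mem_union, mem_closedBall_ofReal_iff hr₁, mem_closedBall_ofReal_iff hr₂]
  -- The difference of the powers of `z` with respect to two of the circles is affine in `z.re`.
  rcases le_total z.re x₀ with hx | hx
  · exact .inl (by nlinarith)
  · exact .inr (by nlinarith)

/-- The image of the disk `D_{a/(Nb)}` under `z ↦ N z`, which no longer depends on `N`. -/
def fracDisk (a b : ℤ) : Set ℂ := Metric.closedBall ((a / b : ℝ) : ℂ) (1 / b)

variable {a b c d : ℤ}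

theorem mem_fracDisk_iff (hb : 0 < b) {z : ℂ} :
    z ∈ fracDisk a b ↔ (b * z.re - a) ^ 2 + (b * z.im) ^ 2 ≤ 1 := by
  have : (0 : ℝ) < b := by exact_mod_cast hb
  have hscale : (z.re - a / b) ^ 2 + z.im ^ 2 =
      ((b * z.re - a) ^ 2 + (b * z.im) ^ 2) / (b : ℝ) ^ 2 := by
    field_simp
  rw [fracDisk, mem_closedBall_ofReal_iff (by positivity), hscale, one_div, inv_pow, ← one_div,
    div_le_div_iff_of_pos_right (by positivity)]

theorem mk_div_mem_fracDisk_iff (hd : 0 < d) {x y w : ℤ} (hw : 0 < w) :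
    (⟨x / w, y / w⟩ : ℂ) ∈ fracDisk c d ↔ (x * d - w * c) ^ 2 + (y * d) ^ 2 ≤ w ^ 2 := by
  have : (0 : ℝ) < w := by exact_mod_cast hw
  have hscale : (d * (x / w) - c : ℝ) ^ 2 + (d * (y / w)) ^ 2 =
      ((x * d - w * c) ^ 2 + (y * d) ^ 2) / (w : ℝ) ^ 2 := by
    field_simp
  rw [mem_fracDisk_iff hd, hscale, div_le_one (by positivity)]
  exact_mod_cast Iff.rfl

theorem fracDisk_subset_fracDisk (hb : 0 < b) (hd : 0 < d) (h : |a * d - b * c| + d ≤ b) :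
    fracDisk a b ⊆ fracDisk c d := by
  have hbR : (0 : ℝ) < b := by exact_mod_cast hb
  have hdR : (0 : ℝ) < d := by exact_mod_cast hd
  refine Metric.closedBall_subset_closedBall' ?_
  have hdist : dist ((a / b : ℝ) : ℂ) ((c / d : ℝ) : ℂ) = |(a * d - b * c : ℝ)| / (b * d) := by
    rw [Complex.dist_eq, ← Complex.ofReal_sub, Complex.norm_real, Real.norm_eq_abs,
      div_sub_div _ _ hbR.ne' hdR.ne', abs_div, abs_of_pos (mul_pos hbR hdR)]
  have hR : |(a * d - b * c : ℝ)| + d ≤ b := by exact_mod_cast h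
  calc (1 / b : ℝ) + dist ((a / b : ℝ) : ℂ) ((c / d : ℝ) : ℂ)
      = (|(a * d - b * c : ℝ)| + d) / (b * d) := by rw [hdist]; field_simp; ring
    _ ≤ b / (b * d) := by gcongr
    _ = 1 / d := by field_simp

theorem fracDisk_subset_union {m k l l' d' : ℤ} {x : ℝ} (hb : 0 < b) (hd : 0 < d) (hd' : 0 < d')
    (hl : (l / d : ℝ) ≤ k / b) (hl' : (k / b : ℝ) ≤ l' / d')
    (hpow : (x - l / d) ^ 2 - (1 / d) ^ 2 ≤ (x - k / b) ^ 2 - (1 / b) ^ 2)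
    (hpow' : (x - l' / d') ^ 2 - (1 / d') ^ 2 ≤ (x - k / b) ^ 2 - (1 / b) ^ 2) :
    fracDisk (b * m + k) b ⊆ fracDisk (d * m + l) d ∪ fracDisk (d' * m + l') d' := by
  have hcentre {i j : ℤ} (hj : 0 < j) : ((j * m + i : ℤ) / j : ℝ) = m + i / j := by
    have : (j : ℝ) ≠ 0 := by exact_mod_cast hj.ne'
    push_cast
    field_simp
  rw [fracDisk, fracDisk, fracDisk, hcentre hb, hcentre hd, hcentre hd']
  apply closedBall_ofReal_subset_union (x₀ := m + x) (by positivity) (by positivity) <;>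
    simpa only [add_sub_add_left_eq_sub, add_le_add_iff_left]

theorem natCast_sub_mem_fracDisk_iff (N : ℕ) (hb : 0 < b) {z : ℂ} :
    (N - z : ℂ) ∈ fracDisk (N * b - a) b ↔ z ∈ fracDisk a b := by
  rw [mem_fracDisk_iff hb, mem_fracDisk_iff hb]
  simp only [Complex.sub_re, Complex.sub_im, Complex.natCast_re, Complex.natCast_im]
  push_cast
  ring_nf

theorem pos_of_den_eq_mul {N : ℕ} {α : ℚ} (hα : (α.den : ℤ) = N * b) : 0 < b :=
  pos_of_mul_pos_right (hα ▸ Int.natCast_pos.2 α.den_pos) (Int.natCast_nonneg N)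

theorem mem_disk_iff_mul_mem_fracDisk {N : ℕ} {α : ℚ} (hα : (α.den : ℤ) = N * b) {z : ℂ} :
    z ∈ disk α ↔ N * z ∈ fracDisk α.num b := by
  have hden : (α.den : ℝ) = N * b := by exact_mod_cast hα
  have : (0 : ℝ) < α.den := by exact_mod_cast α.den_pos
  have hscale : (z.re - α) ^ 2 + z.im ^ 2 =
      ((b * (N * z.re) - α.num) ^ 2 + (b * (N * z.im)) ^ 2) / (α.den : ℝ) ^ 2 := by
    rw [Rat.cast_def]
    field_simp
    rw [hden]
    ring
  rw [mem_fracDisk_iff (pos_of_den_eq_mul hα), disk, ← Complex.ofReal_ratCast,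
    mem_closedBall_ofReal_iff (by positivity), hscale, one_div, inv_pow, ← one_div,
    div_le_div_iff_of_pos_right (by positivity)]
  simp only [Complex.mul_re, Complex.mul_im, Complex.natCast_re, Complex.natCast_im, zero_mul,
    sub_zero, add_zero]

end Disks

section Exposed

/-- The pairs `(a, b)` for which `a / (N b)` is a rational of `[0, 1]` in lowest terms: they encode
the elements of `cand N`, whose denominators are divisible by `N`. -/
structure IsAdmissible (N : ℕ) (a b : ℤ) : Prop where
  den_pos : 0 < b
  num_nonneg : 0 ≤ a
  num_le : a ≤ N * b
  isCoprime : IsCoprime a (N * b)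

/-- The pairs `(a, b)` encoding the elements `a / (N b)` of `SSet N`: some point of the disk of
`(a, b)` lies in no disk of another admissible pair. -/
def IsExposed (N : ℕ) (a b : ℤ) : Prop :=
  IsAdmissible N a b ∧
    ∃ z ∈ fracDisk a b, ∀ ⦃c d⦄, IsAdmissible N c d → z ∈ fracDisk c d → c = a ∧ d = b

variable {N : ℕ} {a b c d : ℤ} {α β : ℚ}

theorem mem_cand_iff_isAdmissible (hα : (α.den : ℤ) = N * b) :
    α ∈ cand N ↔ IsAdmissible N α.num b := by
  have hle : α ≤ 1 ↔ α.num ≤ N * b := hα ▸ Rat.num_le_denom_iff.symm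
  have hcop : IsCoprime α.num (N * b) := hα ▸ Rat.isCoprime_num_den α
  have hdvd : N ∣ α.den := Int.natCast_dvd_natCast.1 ⟨b, hα⟩
  exact ⟨fun ⟨h0, h1, _⟩ => ⟨pos_of_den_eq_mul hα, Rat.num_nonneg.2 h0, hle.1 h1, hcop⟩,
    fun h => ⟨Rat.num_nonneg.1 h.num_nonneg, hle.2 h.num_le, hdvd⟩⟩

theorem exists_den_eq_mul_of_mem_cand (hα : α ∈ cand N) : ∃ b : ℤ, (α.den : ℤ) = N * b :=
  Int.natCast_dvd_natCast.2 hα.2.2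

theorem IsAdmissible.exists_num_den (hN : 0 < N) (h : IsAdmissible N a b) :
    ∃ α : ℚ, α.num = a ∧ (α.den : ℤ) = N * b := by
  have hpos : 0 < N * b := mul_pos (by exact_mod_cast hN) h.den_pos
  have hcop : a.natAbs.Coprime (N * b).natAbs := Int.isCoprime_iff_nat_coprime.1 h.isCoprime
  exact ⟨a / (N * b : ℤ), Rat.num_div_eq_of_coprime hpos hcop, Rat.den_div_eq_of_coprime hpos hcop⟩

theorem num_den_inj (hN : 0 < N) (hα : (α.den : ℤ) = N * b) (hβ : (β.den : ℤ) = N * d) :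
    β = α ↔ β.num = α.num ∧ d = b := by
  have hN' : (N : ℤ) ≠ 0 := by exact_mod_cast hN.ne'
  have hden : β.den = α.den ↔ d = b := by
    rw [← Int.natCast_inj, hα, hβ, mul_right_inj' hN']
  rw [← hden]
  exact ⟨by rintro rfl; exact ⟨rfl, rfl⟩, fun h => Rat.ext h.1 h.2⟩

theorem mem_SSet_iff_isExposed (hN : 0 < N) (hα : (α.den : ℤ) = N * b) :
    α ∈ SSet N ↔ IsExposed N α.num b := by
  have hN' : (N : ℂ) ≠ 0 := by exact_mod_cast hN.ne'
  refine and_congr (mem_cand_iff_isAdmissible hα) ?_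
  simp only [Set.not_subset, Set.mem_iUnion₂, not_exists]
  constructor
  · rintro ⟨z, hz, hz_notMem⟩
    refine ⟨N * z, (mem_disk_iff_mul_mem_fracDisk hα).1 hz, fun c d hcd hzcd => ?_⟩
    obtain ⟨β, rfl, hβ⟩ := hcd.exists_num_den hN
    refine (num_den_inj hN hα hβ).1 (by_contra fun hne => ?_)
    exact hz_notMem β ⟨(mem_cand_iff_isAdmissible hβ).2 hcd, hne⟩
      ((mem_disk_iff_mul_mem_fracDisk hβ).2 hzcd)
  · rintro ⟨z, hz, hz_unique⟩
    obtain ⟨w, rfl⟩ : ∃ w, (N : ℂ) * w = z := ⟨z / N, mul_div_cancel₀ z hN'⟩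
    refine ⟨w, (mem_disk_iff_mul_mem_fracDisk hα).2 hz, fun β hβ hwβ => hβ.2 ?_⟩
    obtain ⟨d, hd⟩ := exists_den_eq_mul_of_mem_cand hβ.1
    exact (num_den_inj hN hα hd).2 (hz_unique ((mem_cand_iff_isAdmissible hd).1 hβ.1)
      ((mem_disk_iff_mul_mem_fracDisk hd).1 hwβ))

theorem northPole_mem_disk_iff (hN : 0 < N) (hα : (α.den : ℤ) = N * b)
    (hβ : (β.den : ℤ) = N * d) :
    northPole α ∈ disk β ↔ (α.num * d - b * β.num) ^ 2 + d ^ 2 ≤ b ^ 2 := by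
  have hN' : (N : ℝ) ≠ 0 := by exact_mod_cast hN.ne'
  have hden : (α.den : ℝ) = N * b := by exact_mod_cast hα
  have hpole : northPole α = (⟨α, 1 / α.den⟩ : ℂ) :=
    Complex.ext (by simp [northPole]) (by simp [northPole])
  have hmul : N * northPole α = (⟨α.num / b, (1 : ℤ) / b⟩ : ℂ) := by
    rw [hpole, Rat.cast_def, hden]
    apply Complex.ext <;> simp <;> field_simp
  rw [mem_disk_iff_mul_mem_fracDisk hβ, hmul, mk_div_mem_fracDisk_iff (pos_of_den_eq_mul hβ)
    (pos_of_den_eq_mul hα), one_mul]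

theorem IsAdmissible.reflect (h : IsAdmissible N a b) : IsAdmissible N (N * b - a) b :=
  ⟨h.den_pos, by linarith [h.num_le], by linarith [h.num_nonneg],
    by simpa [sub_eq_add_neg] using h.isCoprime.neg_left.mul_add_left_left 1⟩

theorem IsExposed.reflect (h : IsExposed N a b) : IsExposed N (N * b - a) b := by
  obtain ⟨hab, z, hz, hz_unique⟩ := h
  refine ⟨hab.reflect, N - z, (natCast_sub_mem_fracDisk_iff N hab.den_pos).2 hz,
    fun c d hcd hzcd => ?_⟩
  have hmem : z ∈ fracDisk (N * d - c) d :=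
    (natCast_sub_mem_fracDisk_iff N hcd.den_pos).1 (by rwa [sub_sub_cancel])
  obtain ⟨hc, rfl⟩ := hz_unique hcd.reflect hmem
  exact ⟨by linarith, rfl⟩

theorem IsExposed.not_subset_union (h : IsExposed N a b) {c' d' : ℤ} (hcd : IsAdmissible N c d)
    (hcd' : IsAdmissible N c' d') (hd : d ≠ b) (hd' : d' ≠ b) :
    ¬ fracDisk a b ⊆ fracDisk c d ∪ fracDisk c' d' := by
  obtain ⟨-, z, hz, hz_unique⟩ := h
  rintro hsub
  rcases hsub hz with hz' | hz'
  · exact hd (hz_unique hcd hz').2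
  · exact hd' (hz_unique hcd' hz').2

theorem IsExposed.lt_abs_add (h : IsExposed N a b) (hcd : IsAdmissible N c d) (hd : d < b) :
    b < |a * d - b * c| + d := by
  by_contra! hle
  have hsub := fracDisk_subset_fracDisk h.1.den_pos hcd.den_pos hle
  exact h.not_subset_union hcd hcd hd.ne hd.ne (by rwa [Set.union_self])

end Exposed

section Finiteness

variable {N : ℕ} {a b c d : ℤ}

theorem isCoprime_natCast_of_forall_prime {x : ℤ}
    (h : ∀ p : ℕ, p.Prime → p ∣ N → ¬ (p : ℤ) ∣ x) : IsCoprime x N :=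
  Int.isCoprime_iff_gcd_eq_one.2 <| Nat.coprime_of_dvd fun p hp hpx hpN =>
    h p hp hpN (Int.natCast_dvd.2 hpx)

theorem exists_isCoprime_add_mul (hN : 0 < N) {x y : ℤ} (hxy : IsCoprime x y) :
    ∃ t : ℤ, 1 ≤ t ∧ t ≤ N ∧ IsCoprime (x + t * y) N := by
  -- The product of the primes of `N` not dividing `x` works.
  let t : ℕ := ∏ p ∈ N.primeFactors with ¬ ((p : ℕ) : ℤ) ∣ x, p
  have htN : t ∣ N := (Finset.prod_dvd_prod_of_subset _ _ _ (Finset.filter_subset _ _)).trans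
    (Nat.prod_primeFactors_dvd N)
  refine ⟨t, Int.toNat_le.1 (Nat.pos_of_dvd_of_pos htN hN),
    by exact_mod_cast Nat.le_of_dvd hN htN,
    isCoprime_natCast_of_forall_prime fun p hp hpN hpx => ?_⟩
  have hpZ : Prime (p : ℤ) := Nat.prime_iff_prime_int.1 hp
  have hp_dvd_t : (p : ℤ) ∣ t ↔ ¬ (p : ℤ) ∣ x := by
    rw [Int.natCast_dvd_natCast, hp.prime.dvd_finsetProd_iff]
    constructor
    · rintro ⟨q, hq, hpq⟩
      rw [Finset.mem_filter, Nat.mem_primeFactors] at hq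
      rw [Nat.prime_dvd_prime_iff_eq hp hq.1.1] at hpq
      exact hpq ▸ hq.2
    · exact fun hx => ⟨p, Finset.mem_filter.2 ⟨Nat.mem_primeFactors.2 ⟨hp, hpN, hN.ne'⟩, hx⟩,
        dvd_rfl⟩
  by_cases hx : (p : ℤ) ∣ x
  · rcases hpZ.dvd_or_dvd ((dvd_add_right hx).1 hpx) with hpt | hpy
    · exact hp_dvd_t.1 hpt hx
    · exact hpZ.not_isUnit (hxy.isUnit_of_dvd' hx hpy)
  · exact hx ((dvd_add_left ((hp_dvd_t.2 hx).mul_right y)).1 hpx)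

theorem exists_isCoprime_det_eq (hN : 0 < N) {p q ε : ℤ} (hpq : IsCoprime p q) (hq : 0 < q)
    (hε : ε * ε = 1) :
    ∃ c d : ℤ, 0 < d ∧ d ≤ (N + 1) * q ∧ p * d - q * c = ε ∧ IsCoprime c (N * d) := by
  obtain ⟨u, v, huv⟩ := hpq
  obtain ⟨d₀, hd₀, hd₀q, c₀, hdet⟩ : ∃ d₀, 0 ≤ d₀ ∧ d₀ < q ∧ ∃ c₀, p * d₀ - q * c₀ = ε :=
    ⟨ε * u % q, Int.emod_nonneg _ hq.ne', Int.emod_lt_of_pos _ hq, -(ε * v) - p * (ε * u / q), by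
      rw [Int.emod_def]; linear_combination ε * huv⟩
  obtain ⟨t, ht, htN, hcop⟩ := exists_isCoprime_add_mul hN
    (x := c₀) (y := p) ⟨-(ε * q), ε * d₀, by linear_combination ε * hdet + hε⟩
  have hdet' : p * (d₀ + t * q) - q * (c₀ + t * p) = ε := by linear_combination hdet
  refine ⟨c₀ + t * p, d₀ + t * q, by positivity, ?_, hdet', hcop.mul_right
    ⟨-(ε * q), ε * p, by linear_combination ε * hdet' + hε⟩⟩
  nlinarith

theorem exists_isCoprime_abs_sub_le (a : ℤ) (hb : 0 < b) {n : ℕ} (hn : 0 < n) :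
    ∃ p q : ℤ, 0 < q ∧ q ≤ n ∧ IsCoprime p q ∧ (n + 1) * |a * q - b * p| ≤ b := by
  have hbR : (0 : ℝ) < b := by exact_mod_cast hb
  obtain ⟨r, hr, hrn⟩ := Real.exists_rat_abs_sub_le_and_den_le (a / b : ℝ) hn
  have hden : (0 : ℝ) < r.den := by exact_mod_cast r.den_pos
  refine ⟨r.num, r.den, by exact_mod_cast r.den_pos, by exact_mod_cast hrn,
    Rat.isCoprime_num_den r, ?_⟩
  rw [Rat.cast_def, div_sub_div _ _ hbR.ne' hden.ne', abs_div, abs_of_pos (mul_pos hbR hden),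
    div_le_div_iff₀ (by positivity) (by positivity)] at hr
  have hreal : (n + 1 : ℝ) * |(a * r.den - b * r.num : ℝ)| ≤ b := by
    refine le_of_mul_le_mul_right ?_ hden
    linarith
  exact_mod_cast hreal

theorem abs_sub_add_le_of_det_eq_neg_sign {p q : ℤ} (hq : 0 < q) (hd : 0 < d)
    (hne : a * q - b * p ≠ 0) (hdet : p * d - q * c = -(a * q - b * p).sign)
    (hdb : 2 * d ≤ b) (hde : 2 * d * |a * q - b * p| ≤ q * b) : |a * d - b * c| + d ≤ b := by
  set e := a * q - b * p with he
  have hdist : q * |a * d - b * c| = |b - |e| * d| := by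
    have hmul : q * (a * d - b * c) = -e.sign * (b - |e| * d) := by
      rw [← Int.sign_mul_self_eq_abs e]
      have hsq : e.sign * e.sign = 1 := by
        rw [← Int.sign_mul, Int.sign_eq_one_of_pos (mul_self_pos.2 hne)]
      linear_combination d * he + b * hdet - d * e * hsq
    rw [← abs_of_pos hq, ← abs_mul, hmul, abs_mul, abs_neg, Int.abs_sign_of_ne_zero hne, one_mul]
  refine le_of_mul_le_mul_left ?_ hq
  rw [mul_add, hdist]
  have he_pos : 1 ≤ |e| := Int.one_le_abs hne
  rcases le_total (|e| * d) b with hle | hle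
  · rw [abs_of_nonneg (by linarith)]
    nlinarith
  · rw [abs_of_nonpos (by linarith)]
    nlinarith

theorem exists_isCoprime_abs_sub_add_le (hN : 0 < N) (hab : IsCoprime a b)
    (hb : (N + 1) * (2 * N + 1) ^ 2 < b) :
    ∃ c d : ℤ, 0 < d ∧ d < b ∧ IsCoprime c (N * d) ∧ |a * d - b * c| + d ≤ b := by
  have hb_pos : 0 < b := lt_of_le_of_lt (by positivity) hb
  -- Approximate `a / b` by `p / q`; then `c / d` is a neighbour of `p / q` on the side of `a / b`.
  obtain ⟨p, q, hq, hqn, hpq, happrox⟩ :=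
    exists_isCoprime_abs_sub_le a hb_pos (n := 2 * N + 1) (by omega)
  push_cast at hqn happrox
  have hne : a * q - b * p ≠ 0 := by
    intro hzero
    have hbq : b ∣ q := hab.symm.dvd_of_dvd_mul_left ⟨p, by linear_combination hzero⟩
    nlinarith [Int.le_of_dvd hq hbq]
  have hsq : (-(a * q - b * p).sign) * (-(a * q - b * p).sign) = 1 := by
    rw [neg_mul_neg, ← Int.sign_mul, Int.sign_eq_one_of_pos (mul_self_pos.2 hne)]
  obtain ⟨c, d, hd, hdq, hdet, hcd⟩ := exists_isCoprime_det_eq hN hpq hq hsq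
  have hdb : 2 * d ≤ b := by nlinarith
  have hde : 2 * d * |a * q - b * p| ≤ q * b :=
    calc 2 * d * |a * q - b * p| ≤ 2 * ((N + 1) * q) * |a * q - b * p| := by gcongr
      _ = q * ((2 * N + 1 + 1) * |a * q - b * p|) := by ring
      _ ≤ q * b := by gcongr
  exact ⟨c, d, hd, by linarith, hcd, abs_sub_add_le_of_det_eq_neg_sign hq hd hne hdet hdb hde⟩

theorem IsAdmissible.of_abs_lt (h : IsAdmissible N a b) (hd : 0 < d) (hc : IsCoprime c (N * d))
    (hlt : |a * d - b * c| < b) : IsAdmissible N c d := by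
  have hb := h.den_pos
  have had : 0 ≤ a * d := mul_nonneg h.num_nonneg hd.le
  have had' : a * d ≤ b * (N * d) := by nlinarith [h.num_le]
  obtain ⟨hlo, hhi⟩ := abs_lt.1 hlt
  refine ⟨hd, ?_, ?_, hc⟩
  · by_contra! hneg
    nlinarith
  · by_contra! hgt
    nlinarith

theorem IsExposed.den_le (hN : 0 < N) (h : IsExposed N a b) :
    b ≤ (N + 1) * (2 * N + 1) ^ 2 := by
  by_contra! hb
  obtain ⟨c, d, hd, hdb, hcd, hclose⟩ :=
    exists_isCoprime_abs_sub_add_le hN h.1.isCoprime.of_mul_right_right hb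
  exact (h.lt_abs_add (h.1.of_abs_lt hd hcd (by linarith)) hdb).not_ge hclose

theorem finite_SSet (hN : 0 < N) : (SSet N).Finite := by
  set B : ℤ := (N + 1) * (2 * N + 1) ^ 2
  refine (((Set.finite_Icc 0 (N * B)).prod (Set.finite_Icc 0 B)).image
    fun p : ℤ × ℤ => (p.1 / (N * p.2 : ℤ) : ℚ)).subset fun α hα => ?_
  obtain ⟨b, hb⟩ := exists_den_eq_mul_of_mem_cand hα.1
  have hexp : IsExposed N α.num b := (mem_SSet_iff_isExposed hN hb).1 hα
  have hbB : b ≤ B := hexp.den_le hN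
  have hadm := hexp.1
  refine ⟨(α.num, b), ⟨⟨hadm.num_nonneg, hadm.num_le.trans (by gcongr)⟩, hadm.den_pos.le, hbB⟩, ?_⟩
  simp only [← hb, Int.cast_natCast, Rat.num_div_den]

theorem cN_eq_zero_iff_forall_northPole_notMem (hN : 0 < N) :
    cN N = 0 ↔ ∀ α ∈ SSet N, ∀ β ∈ SSet N, β ≠ α → northPole α ∉ disk β := by
  have hfin := finite_SSet hN
  have hbdd : BddAbove (poleComplexity (SSet N) '' SSet N) := (hfin.image _).bddAbove
  have hpole (α : ℚ) : poleComplexity (SSet N) α = 0 ↔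
      ∀ β ∈ SSet N, β ≠ α → northPole α ∉ disk β := by
    rw [poleComplexity, Set.ncard_eq_zero (hfin.subset fun _ h => h.1),
      Set.eq_empty_iff_forall_notMem]
    simp only [Set.mem_ofPred_eq, not_and]
  simp only [← hpole]
  constructor
  · exact fun h α hα => Nat.le_zero.1 (h ▸ le_csSup hbdd ⟨α, hα, rfl⟩)
  · exact fun h => Nat.le_zero.1 (csSup_le' (by rintro _ ⟨α, hα, rfl⟩; exact (h α hα).le))

end Finiteness

/-- The exposed pairs `(b m + k, b)` with `0 < k < b`, that is, those whose disk has its centre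
`m + k / b` strictly between the integers `m` and `m + 1` after scaling by `N`. -/
structure IsExposedAt (N : ℕ) (m k b : ℤ) : Prop where
  pos : 0 < k
  lt : k < b
  isExposed : IsExposed N (b * m + k) b

namespace IsExposedAt

variable {N : ℕ} {m k b l d : ℤ}

theorem isCoprime (h : IsExposedAt N m k b) : IsCoprime k b :=
  IsCoprime.of_mul_add_left_left h.isExposed.1.isCoprime.of_mul_right_right

theorem isCoprime_num (h : IsExposedAt N m k b) : IsCoprime (b * m + k) N :=
  h.isExposed.1.isCoprime.of_mul_right_left

theorem isAdmissible (h : IsExposedAt N m k b) (hd : 0 < d) (hl : 0 ≤ l) (hld : l ≤ d)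
    (hcop : IsCoprime l d) (hN : IsCoprime (d * m + l) N) : IsAdmissible N (d * m + l) d := by
  obtain ⟨hk, hkb, ⟨-, hnum, hnum', -⟩, -⟩ := h
  have hm : 0 ≤ m := by
    by_contra! hneg
    nlinarith
  have hmN : m + 1 ≤ N := by
    by_contra! hgt
    nlinarith
  exact ⟨hd, by positivity, by nlinarith, hN.mul_right (hcop.mul_add_left_left m)⟩

theorem lt_or_lt (h : IsExposedAt N m k b) (hadm : IsAdmissible N (d * m + l) d) (hd : d < b) :
    b < k * d - b * l + d ∨ b < b * l - k * d + d := by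
  have hlt := h.isExposed.lt_abs_add hadm hd
  rw [show (b * m + k) * d - b * (d * m + l) = k * d - b * l by ring, ← sub_lt_iff_lt_add,
    lt_abs] at hlt
  omega

theorem reflect (h : IsExposedAt N m k b) : IsExposedAt N (N - 1 - m) (b - k) b := by
  refine ⟨sub_pos.2 h.lt, sub_lt_self b h.pos, ?_⟩
  rw [show b * (N - 1 - m) + (b - k) = N * b - (b * m + k) by ring]
  exact h.isExposed.reflect

theorem not_isCoprime_zero (h : IsExposedAt N m k b) : ¬ IsCoprime m N := by
  intro hc
  have hlt := h.lt_or_lt (h.isAdmissible (l := 0) one_pos le_rfl zero_le_one isCoprime_one_right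
    (by simpa using hc))
  have := h.pos
  have := h.lt
  omega

theorem not_isCoprime_one (h : IsExposedAt N m k b) : ¬ IsCoprime (m + 1) N := by
  intro hc
  have hlt := h.lt_or_lt (h.isAdmissible (l := 1) one_pos zero_le_one le_rfl isCoprime_one_right
    (by simpa using hc))
  have := h.pos
  have := h.lt
  omega

theorem not_isCoprime_half (h : IsExposedAt N m k b) (hb : 2 < b) : ¬ IsCoprime (2 * m + 1) N := by
  intro hc
  have hlt := h.lt_or_lt (h.isAdmissible two_pos zero_le_one one_le_two isCoprime_one_left hc) hb
  have := h.pos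
  have := h.lt
  omega

theorem eq_of_mul_eq_mul (h : IsExposedAt N m k b) (hd : 0 < d) (hcop : IsCoprime l d)
    (heq : k * d = b * l) : k = l ∧ b = d := by
  have hb : 0 < b := h.pos.trans h.lt
  have hbd : b ∣ d := h.isCoprime.symm.dvd_of_dvd_mul_left ⟨l, heq⟩
  have hdb : d ∣ b := hcop.symm.dvd_of_dvd_mul_right ⟨k, by linarith⟩
  obtain rfl := Int.dvd_antisymm hb.le hd.le hbd hdb
  exact ⟨mul_right_cancel₀ hb.ne' (by linarith), rfl⟩

theorem isExposedAt_of_abs_lt (h : IsExposedAt N m k b) (h' : IsExposed N (d * m + l) d)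
    (hdb : d < b) (hlt : |k * d - b * l| < b) : IsExposedAt N m l d ∧ 2 < d := by
  have hd := h'.1.den_pos
  have hc : IsCoprime (d * m + l) N := h'.1.isCoprime.of_mul_right_left
  have hk := h.pos
  have hkb := h.lt
  obtain ⟨hlo, hhi⟩ := abs_lt.1 hlt
  have hl : 0 ≤ l := by
    by_contra! hneg
    nlinarith
  have hld : l ≤ d := by
    by_contra! hgt
    nlinarith
  have hl_ne : l ≠ 0 := by
    rintro rfl
    exact h.not_isCoprime_zero (IsCoprime.of_mul_left_right (x := d) (by rwa [← add_zero (d * m)]))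
  have hld_ne : l ≠ d := by
    rintro rfl
    exact h.not_isCoprime_one (IsCoprime.of_mul_left_right (x := l) (by rwa [mul_add_one]))
  refine ⟨⟨by omega, by omega, h'⟩, lt_of_le_of_ne (by omega) ?_⟩
  rintro rfl
  obtain rfl : l = 1 := by omega
  exact h.not_isCoprime_half hdb hc

end IsExposedAt

theorem IsExposed.exists_isExposedAt {N : ℕ} {a b : ℤ} (h : IsExposed N a b) (hb : 1 < b) :
    ∃ m k, a = b * m + k ∧ IsExposedAt N m k b := by
  have hb_pos : 0 < b := by omega
  have ha : a = b * (a / b) + a % b := (Int.mul_ediv_add_emod a b).symm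
  refine ⟨a / b, a % b, ha, (Int.emod_nonneg _ hb_pos.ne').lt_of_ne' fun hdvd => ?_,
    Int.emod_lt_of_pos _ hb_pos, ha ▸ h⟩
  have hunit : IsUnit b := h.1.isCoprime.of_mul_right_right.isUnit_of_dvd'
    (Int.dvd_of_emod_eq_zero hdvd) dvd_rfl
  rcases Int.isUnit_iff.1 hunit with rfl | rfl <;> omega

theorem IsExposed.exists_isExposedAt_of_sq_add_sq_le {N : ℕ} {a b c d : ℤ} (h : IsExposed N a b)
    (h' : IsExposed N c d) (hne : ¬ (c = a ∧ d = b))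
    (hpole : (a * d - b * c) ^ 2 + d ^ 2 ≤ b ^ 2) :
    ∃ m k l, IsExposedAt N m k b ∧ IsExposedAt N m l d ∧ 2 < d ∧ d < b ∧
      (k * d - b * l) ^ 2 + d ^ 2 ≤ b ^ 2 := by
  have hb := h.1.den_pos
  have hd := h'.1.den_pos
  have hdb : d < b := by
    refine lt_of_le_of_ne (by nlinarith) ?_
    rintro rfl
    have hzero : d * (a - c) = 0 := by nlinarith
    rcases mul_eq_zero.1 hzero with h0 | h0
    · exact hd.ne' h0
    · exact hne ⟨by linarith, rfl⟩
  obtain ⟨m, k, rfl, hat⟩ := h.exists_isExposedAt (by omega)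
  obtain ⟨l, rfl⟩ : ∃ l, c = d * m + l := ⟨c - d * m, by ring⟩
  rw [show (b * m + k) * d - b * (d * m + l) = k * d - b * l by ring] at hpole
  have hlt : |k * d - b * l| < b := abs_lt_of_sq_lt_sq (by nlinarith) hb.le
  obtain ⟨hat', hd2⟩ := hat.isExposedAt_of_abs_lt h' hdb hlt
  exact ⟨m, k, l, hat, hat', hd2, hdb, hpole⟩

namespace IsExposedAt

variable {N : ℕ} {m k b l d : ℤ}

theorem mul_ne_mul_of_not_isCoprime (h : IsExposedAt N m k b) (hd : 0 < d) (hcop : IsCoprime l d)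
    (hN : ¬ IsCoprime (d * m + l) N) : k * d ≠ b * l := by
  intro heq
  obtain ⟨rfl, rfl⟩ := h.eq_of_mul_eq_mul hd hcop heq
  exact hN h.isCoprime_num

theorem eq_three_of_isCoprime (h : IsExposedAt N m k b) (hb : 2 < b)
    (h13 : IsCoprime (3 * m + 1) N) (h23 : IsCoprime (3 * m + 2) N) : b = 3 := by
  have hlt13 := h.lt_or_lt (h.isAdmissible (l := 1) (d := 3) (by norm_num) (by norm_num)
    (by norm_num) (by norm_num) h13)
  have hlt23 := h.lt_or_lt (h.isAdmissible (l := 2) (d := 3) (by norm_num) (by norm_num)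
    (by norm_num) (by norm_num) h23)
  have hne12 := h.mul_ne_mul_of_not_isCoprime (l := 1) (d := 2) (by norm_num) (by norm_num)
    (h.not_isCoprime_half hb)
  have := h.pos
  have := h.lt
  omega

theorem eq_third_or_three_quarters (h : IsExposedAt N m k b) (hb : 2 < b)
    (h23 : ¬ IsCoprime (3 * m + 2) N) (h13 : IsCoprime (3 * m + 1) N)
    (h35 : IsCoprime (5 * m + 3) N) (h34 : IsCoprime (4 * m + 3) N) :
    (k = 1 ∧ b = 3) ∨ (k = 3 ∧ b = 4) := by
  have hadm13 := h.isAdmissible (l := 1) (d := 3) (by norm_num) (by norm_num) (by norm_num)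
    (by norm_num) h13
  have hadm34 := h.isAdmissible (l := 3) (d := 4) (by norm_num) (by norm_num) (by norm_num)
    (by norm_num) h34
  have hadm35 := h.isAdmissible (l := 3) (d := 5) (by norm_num) (by norm_num) (by norm_num)
    (by norm_num) h35
  have hfinite : (k = 1 ∧ b = 3) ∨ (k = 3 ∧ b = 4) ∨ (k = 3 ∧ b = 5) := by
    have := h.lt_or_lt hadm13
    have := h.lt_or_lt hadm34
    have := h.lt_or_lt hadm35
    have := h.mul_ne_mul_of_not_isCoprime (l := 1) (d := 2) (by norm_num) (by norm_num)
      (h.not_isCoprime_half hb)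
    have := h.mul_ne_mul_of_not_isCoprime (l := 2) (d := 3) (by norm_num) (by norm_num) h23
    have := h.pos
    have := h.lt
    omega
  rcases hfinite with hthird | hquarters | ⟨rfl, rfl⟩
  · exact .inl hthird
  · exact .inr hquarters
  · exact (h.isExposed.not_subset_union hadm13 hadm34 (by norm_num) (by norm_num)
      (fracDisk_subset_union (x := 3 / 5) (by norm_num) (by norm_num) (by norm_num)
        (by norm_num) (by norm_num) (by norm_num) (by norm_num))).elim

theorem eq_third_or_four_fifths (h : IsExposedAt N m k b) (hb : 2 < b)
    (h23 : ¬ IsCoprime (3 * m + 2) N) (h35 : ¬ IsCoprime (5 * m + 3) N)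
    (h34 : ¬ IsCoprime (4 * m + 3) N) (h13 : IsCoprime (3 * m + 1) N)
    (h47 : IsCoprime (7 * m + 4) N) (h58 : IsCoprime (8 * m + 5) N)
    (h57 : IsCoprime (7 * m + 5) N) (h45 : IsCoprime (5 * m + 4) N) :
    (k = 1 ∧ b = 3) ∨ (k = 4 ∧ b = 5) := by
  have hadm13 := h.isAdmissible (l := 1) (d := 3) (by norm_num) (by norm_num) (by norm_num)
    (by norm_num) h13
  have hadm45 := h.isAdmissible (l := 4) (d := 5) (by norm_num) (by norm_num) (by norm_num)
    (by norm_num) h45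
  have hfinite : (k = 1 ∧ b = 3) ∨ (k = 4 ∧ b = 5) ∨ (k = 4 ∧ b = 7) ∨ (k = 5 ∧ b = 8) ∨
      (k = 5 ∧ b = 7) := by
    have := h.lt_or_lt hadm13
    have := h.lt_or_lt hadm45
    have := h.lt_or_lt (h.isAdmissible (l := 4) (d := 7) (by norm_num) (by norm_num) (by norm_num)
      (by norm_num) h47)
    have := h.lt_or_lt (h.isAdmissible (l := 5) (d := 8) (by norm_num) (by norm_num) (by norm_num)
      (by norm_num) h58)
    have := h.lt_or_lt (h.isAdmissible (l := 5) (d := 7) (by norm_num) (by norm_num) (by norm_num)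
      (by norm_num) h57)
    have := h.mul_ne_mul_of_not_isCoprime (l := 1) (d := 2) (by norm_num) (by norm_num)
      (h.not_isCoprime_half hb)
    have := h.mul_ne_mul_of_not_isCoprime (l := 2) (d := 3) (by norm_num) (by norm_num) h23
    have := h.mul_ne_mul_of_not_isCoprime (l := 3) (d := 5) (by norm_num) (by norm_num) h35
    have := h.mul_ne_mul_of_not_isCoprime (l := 3) (d := 4) (by norm_num) (by norm_num) h34
    have := h.pos
    have := h.lt
    omega
  rcases hfinite with hthird | hfifths | ⟨rfl, rfl⟩ | ⟨rfl, rfl⟩ | ⟨rfl, rfl⟩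
  · exact .inl hthird
  · exact .inr hfifths
  -- The radical axis of the circles of `1 / 3` and `4 / 5` meets the real line at `9 / 14`.
  all_goals exact (h.isExposed.not_subset_union hadm13 hadm45 (by norm_num) (by norm_num)
    (fracDisk_subset_union (x := 9 / 14) (by norm_num) (by norm_num) (by norm_num)
      (by norm_num) (by norm_num) (by norm_num) (by norm_num))).elim

end IsExposedAt

section Covers

variable {N : ℕ} {m : ℤ}

theorem isCoprime_of_forall_exists_dvd {L : Finset (ℤ × ℤ)} {l d n : ℤ}
    (hcover : ∀ p : ℕ, p.Prime → p ∣ N → ∃ v ∈ L, (p : ℤ) ∣ v.2 * m + v.1)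
    (hdet : ∀ v ∈ L, v.1 * d - l * v.2 ≠ 0 ∧ |v.1 * d - l * v.2| ≤ n)
    (hsmall : ∀ p : ℕ, p.Prime → p ≤ n → p ∣ N → ¬ (p : ℤ) ∣ d * m + l) :
    IsCoprime (d * m + l) N := by
  refine isCoprime_natCast_of_forall_prime fun p hp hpN hpx => ?_
  obtain ⟨v, hv, hpv⟩ := hcover p hp hpN
  obtain ⟨hdet_ne, hdet_le⟩ := hdet v hv
  have hp_det : (p : ℤ) ∣ v.1 * d - l * v.2 := by
    have hdvd := (hpv.mul_left d).sub (hpx.mul_left v.2)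
    rwa [show d * (v.2 * m + v.1) - v.2 * (d * m + l) = v.1 * d - l * v.2 by ring] at hdvd
  have hp_le : (p : ℤ) ≤ n :=
    (Int.le_of_dvd (abs_pos.2 hdet_ne) ((dvd_abs _ _).2 hp_det)).trans hdet_le
  exact hsmall p hp hp_le hpN hpx

theorem isCoprime_of_abs_le_four {L : Finset (ℤ × ℤ)} {l d : ℤ}
    (hcover : ∀ p : ℕ, p.Prime → p ∣ N → ∃ v ∈ L, (p : ℤ) ∣ v.2 * m + v.1)
    (hdet : ∀ v ∈ L, v.1 * d - l * v.2 ≠ 0 ∧ |v.1 * d - l * v.2| ≤ 4)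
    (h2 : 2 ∣ N → ¬ 2 ∣ d * m + l) (h3 : 3 ∣ N → ¬ 3 ∣ d * m + l) : IsCoprime (d * m + l) N := by
  refine isCoprime_of_forall_exists_dvd hcover hdet fun p hp hp4 => ?_
  have : p ≤ 4 := by exact_mod_cast hp4
  interval_cases p
  exacts [absurd hp (by norm_num), absurd hp (by norm_num), h2, h3, absurd hp (by norm_num)]

theorem isCoprime_of_abs_le_five {L : Finset (ℤ × ℤ)} {l d : ℤ}
    (hcover : ∀ p : ℕ, p.Prime → p ∣ N → ∃ v ∈ L, (p : ℤ) ∣ v.2 * m + v.1)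
    (hdet : ∀ v ∈ L, v.1 * d - l * v.2 ≠ 0 ∧ |v.1 * d - l * v.2| ≤ 5)
    (h2 : 2 ∣ N → ¬ 2 ∣ d * m + l) (h3 : 3 ∣ N → ¬ 3 ∣ d * m + l)
    (h5 : 5 ∣ N → ¬ 5 ∣ d * m + l) : IsCoprime (d * m + l) N := by
  refine isCoprime_of_forall_exists_dvd hcover hdet fun p hp hp5 => ?_
  have : p ≤ 5 := by exact_mod_cast hp5
  interval_cases p
  exacts [absurd hp (by norm_num), absurd hp (by norm_num), h2, h3, absurd hp (by norm_num), h5]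

theorem not_dvd_of_dvd_of_isCoprime {p : ℕ} (hp : p.Prime) {x y : ℤ} (hxy : IsCoprime x y)
    (hx : (p : ℤ) ∣ x) : ¬ (p : ℤ) ∣ y := fun hy =>
  (Nat.prime_iff_prime_int.1 hp).not_isUnit (hxy.isUnit_of_dvd' hx hy)

theorem ne_of_dvd_of_isCoprime {p q : ℕ} (hp : p.Prime) {x y : ℤ} (hxy : IsCoprime x y)
    (hx : (p : ℤ) ∣ x) (hy : (q : ℤ) ∣ y) : p ≠ q := by
  rintro rfl
  exact not_dvd_of_dvd_of_isCoprime hp hxy hx hy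

theorem exists_prime_dvd_of_not_isCoprime {x : ℤ} (h : ¬ IsCoprime x N) :
    ∃ p : ℕ, p.Prime ∧ p ∣ N ∧ (p : ℤ) ∣ x := by
  by_contra! hnone
  exact h (isCoprime_natCast_of_forall_prime fun p hp hpN => hnone p hp hpN)

theorem exists_primeFactors_eq (hN : N ≠ 0)
    (hω : N.primeFactors.card ≤ 3 ∨ (N.primeFactors.card = 4 ∧ Odd N))
    (h0 : ¬ IsCoprime m N) (h1 : ¬ IsCoprime (m + 1) N) (h12 : ¬ IsCoprime (2 * m + 1) N)
    (h23 : ¬ IsCoprime (3 * m + 2) N) :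
    ∃ p q r t : ℕ, (p : ℤ) ∣ m ∧ (q : ℤ) ∣ m + 1 ∧ (r : ℤ) ∣ 2 * m + 1 ∧ (t : ℤ) ∣ 3 * m + 2 ∧
      N.primeFactors = {p, q, r, t} ∧ (2 ∣ N → p = 2 ∧ t = 2) := by
  obtain ⟨p, hp, hpN, hpm⟩ := exists_prime_dvd_of_not_isCoprime h0
  obtain ⟨q, hq, hqN, hqm⟩ := exists_prime_dvd_of_not_isCoprime h1
  obtain ⟨r, hr, hrN, hrm⟩ := exists_prime_dvd_of_not_isCoprime h12
  obtain ⟨t, ht, htN, htm⟩ := exists_prime_dvd_of_not_isCoprime h23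
  refine ⟨p, q, r, t, hpm, hqm, hrm, htm, ?_⟩
  have hpq : p ≠ q := ne_of_dvd_of_isCoprime hp ⟨-1, 1, by ring⟩ hpm hqm
  have hpr : p ≠ r := ne_of_dvd_of_isCoprime hp ⟨-2, 1, by ring⟩ hpm hrm
  have hqr : q ≠ r := ne_of_dvd_of_isCoprime hq ⟨2, -1, by ring⟩ hqm hrm
  have hqt : q ≠ t := ne_of_dvd_of_isCoprime hq ⟨3, -1, by ring⟩ hqm htm
  have hrt : r ≠ t := ne_of_dvd_of_isCoprime hr ⟨-3, 2, by ring⟩ hrm htm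
  have hsub : {p, q, r, t} ⊆ N.primeFactors := by
    simp only [Finset.insert_subset_iff, Finset.singleton_subset_iff, Nat.mem_primeFactors]
    exact ⟨⟨hp, hpN, hN⟩, ⟨hq, hqN, hN⟩, ⟨hr, hrN, hN⟩, ⟨ht, htN, hN⟩⟩
  rcases eq_or_ne p t with rfl | hpt
  · have hp2 : p = 2 := by
      have hp_dvd : (p : ℤ) ∣ (2 : ℕ) := (dvd_add_right (hpm.mul_left 3)).1 htm
      exact (Nat.prime_dvd_prime_iff_eq hp Nat.prime_two).1 (Int.natCast_dvd_natCast.1 hp_dvd)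
    have hcard : ({p, q, r, p} : Finset ℕ).card = 3 := by
      rw [Finset.insert_eq_of_mem (by simp), Finset.card_eq_three]
      exact ⟨q, r, p, hqr, hpq.symm, hpr.symm, rfl⟩
    have hle : N.primeFactors.card ≤ 3 :=
      hω.resolve_right fun h => Nat.not_even_iff_odd.2 h.2 (even_iff_two_dvd.2 (hp2 ▸ hpN))
    exact ⟨(Finset.eq_of_subset_of_card_le hsub (by omega)).symm, fun _ => ⟨hp2, hp2⟩⟩
  · have hcard : ({p, q, r, t} : Finset ℕ).card = 4 :=
      Finset.card_eq_succ.2 ⟨p, {q, r, t}, by simp [*], rfl,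
        Finset.card_eq_three.2 ⟨q, r, t, hqr, hqt, hrt, rfl⟩⟩
    have hle := Finset.card_le_card hsub
    obtain ⟨hω4, hodd⟩ := hω.resolve_left (by omega)
    exact ⟨(Finset.eq_of_subset_of_card_le hsub (by omega)).symm,
      fun h2N => absurd (even_iff_two_dvd.2 h2N) (Nat.not_even_iff_odd.2 hodd)⟩

theorem forall_prime_exists_dvd (hN : N ≠ 0)
    (hω : N.primeFactors.card ≤ 3 ∨ (N.primeFactors.card = 4 ∧ Odd N))
    (h0 : ¬ IsCoprime m N) (h1 : ¬ IsCoprime (m + 1) N) (h12 : ¬ IsCoprime (2 * m + 1) N)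
    (h23 : ¬ IsCoprime (3 * m + 2) N) :
    (∀ p : ℕ, p.Prime → p ∣ N → ∃ v ∈ ({(0, 1), (1, 1), (1, 2), (2, 3)} : Finset (ℤ × ℤ)),
      (p : ℤ) ∣ v.2 * m + v.1) ∧ (2 ∣ N → 2 ∣ m) ∧
      ∀ p p' : ℕ, p.Prime → p'.Prime → p ∣ N → p' ∣ N → (p : ℤ) ∣ m → (p' : ℤ) ∣ m → p = p' := by
  obtain ⟨p, q, r, t, hpm, hqm, hrm, htm, hfactors, h2⟩ :=
    exists_primeFactors_eq hN hω h0 h1 h12 h23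
  have hmem {x : ℕ} (hx : x.Prime) (hxN : x ∣ N) : x = p ∨ x = q ∨ x = r ∨ x = t := by
    have := Nat.mem_primeFactors.2 ⟨hx, hxN, hN⟩
    simpa only [hfactors, Finset.mem_insert, Finset.mem_singleton] using this
  have heq {x : ℕ} (hx : x.Prime) (hxN : x ∣ N) (hxm : (x : ℤ) ∣ m) : x = p := by
    rcases hmem hx hxN with rfl | rfl | rfl | rfl
    · rfl
    · exact absurd hqm (not_dvd_of_dvd_of_isCoprime hx ⟨-1, 1, by ring⟩ hxm)
    · exact absurd hrm (not_dvd_of_dvd_of_isCoprime hx ⟨-2, 1, by ring⟩ hxm)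
    · have hx2 : (x : ℤ) ∣ (2 : ℕ) := (dvd_add_right (hxm.mul_left 3)).1 htm
      obtain rfl := (Nat.prime_dvd_prime_iff_eq hx Nat.prime_two).1 (Int.natCast_dvd_natCast.1 hx2)
      exact (h2 hxN).1.symm
  refine ⟨fun x hx hxN => ?_, fun h2N => by simpa [(h2 h2N).1] using hpm,
    fun x y hx hy hxN hyN hxm hym => (heq hx hxN hxm).trans (heq hy hyN hym).symm⟩
  rcases hmem hx hxN with rfl | rfl | rfl | rfl
  · exact ⟨(0, 1), by decide, by simpa using hpm⟩
  · exact ⟨(1, 1), by decide, by simpa using hqm⟩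
  · exact ⟨(1, 2), by decide, hrm⟩
  · exact ⟨(2, 3), by decide, htm⟩

theorem isCoprime_three_mul_add_one (hN : N ≠ 0)
    (hω : N.primeFactors.card ≤ 3 ∨ (N.primeFactors.card = 4 ∧ Odd N))
    (h0 : ¬ IsCoprime m N) (h1 : ¬ IsCoprime (m + 1) N) (h12 : ¬ IsCoprime (2 * m + 1) N)
    (h23 : ¬ IsCoprime (3 * m + 2) N) : IsCoprime (3 * m + 1) N := by
  obtain ⟨hcover, h2, -⟩ := forall_prime_exists_dvd hN hω h0 h1 h12 h23
  exact isCoprime_of_abs_le_four hcover (by decide) (by omega) (by omega)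

end Covers

theorem forall_isExposedAt_eq_or_forall_eq {N : ℕ} {m : ℤ} (hN : N ≠ 0)
    (hω : N.primeFactors.card ≤ 3 ∨ (N.primeFactors.card = 4 ∧ Odd N))
    (h0 : ¬ IsCoprime m N) (h1 : ¬ IsCoprime (m + 1) N) (h12 : ¬ IsCoprime (2 * m + 1) N)
    (h23 : ¬ IsCoprime (3 * m + 2) N) :
    (∀ k b, IsExposedAt N m k b → 2 < b → (k = 1 ∧ b = 3) ∨ (k = 3 ∧ b = 4)) ∨
      ∀ k b, IsExposedAt N m k b → 2 < b → (k = 1 ∧ b = 3) ∨ (k = 4 ∧ b = 5) := by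
  obtain ⟨hcover, h2, heq⟩ := forall_prime_exists_dvd hN hω h0 h1 h12 h23
  have h13 := isCoprime_three_mul_add_one hN hω h0 h1 h12 h23
  by_cases h3 : 3 ∣ N ∧ 3 ∣ m
  · have h2N : ¬ 2 ∣ N := fun h => absurd
      (heq 2 3 Nat.prime_two Nat.prime_three h h3.1 (h2 h) h3.2) (by norm_num)
    have h5m : 5 ∣ N → ¬ 5 ∣ m := fun h h' => absurd
      (heq 5 3 Nat.prime_five Nat.prime_three h h3.1 h' h3.2) (by norm_num)
    have not_isCoprime_of_dvd {x : ℤ} (hx : 3 ∣ x) : ¬ IsCoprime x N := fun hc =>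
      Int.prime_three.not_isUnit (hc.isUnit_of_dvd' hx (by exact_mod_cast h3.1))
    refine .inr fun k b h hb => h.eq_third_or_four_fifths hb h23
      (not_isCoprime_of_dvd (by omega)) (not_isCoprime_of_dvd (by omega)) h13 ?_ ?_ ?_ ?_
    · exact isCoprime_of_abs_le_four hcover (by decide) (by omega) (by omega)
    · exact isCoprime_of_abs_le_five hcover (by decide) (by omega) (by omega) (by omega)
    · exact isCoprime_of_abs_le_five hcover (by decide) (by omega) (by omega) (by omega)
    · exact isCoprime_of_abs_le_four hcover (by decide) (by omega) (by omega)
  · refine .inl fun k b h hb => h.eq_third_or_three_quarters hb h23 h13 ?_ ?_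
    · exact isCoprime_of_abs_le_four hcover (by decide) (by omega) (by omega)
    · exact isCoprime_of_abs_le_four hcover (by decide) (by omega) (by omega)

namespace IsExposedAt

variable {N : ℕ} {m k b l d : ℤ}

theorem sq_lt_of_two_thirds_not_isCoprime (hN : N ≠ 0)
    (hω : N.primeFactors.card ≤ 3 ∨ (N.primeFactors.card = 4 ∧ Odd N)) (h : IsExposedAt N m k b)
    (h' : IsExposedAt N m l d) (hd : 2 < d) (hdb : d < b) (h23 : ¬ IsCoprime (3 * m + 2) N) :
    b ^ 2 < (k * d - b * l) ^ 2 + d ^ 2 := by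
  rcases forall_isExposedAt_eq_or_forall_eq hN hω h.not_isCoprime_zero h.not_isCoprime_one
    (h'.not_isCoprime_half hd) h23 with hclass | hclass
  · have hkb := hclass k b h (hd.trans hdb)
    have hld := hclass l d h' hd
    obtain ⟨rfl, rfl⟩ : k = 3 ∧ b = 4 := by omega
    obtain ⟨rfl, rfl⟩ : l = 1 ∧ d = 3 := by omega
    norm_num
  · have hkb := hclass k b h (hd.trans hdb)
    have hld := hclass l d h' hd
    obtain ⟨rfl, rfl⟩ : k = 4 ∧ b = 5 := by omega
    obtain ⟨rfl, rfl⟩ : l = 1 ∧ d = 3 := by omega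
    norm_num

theorem sq_lt (hN : N ≠ 0)
    (hω : N.primeFactors.card ≤ 3 ∨ (N.primeFactors.card = 4 ∧ Odd N)) (h : IsExposedAt N m k b)
    (h' : IsExposedAt N m l d) (hd : 2 < d) (hdb : d < b) :
    b ^ 2 < (k * d - b * l) ^ 2 + d ^ 2 := by
  by_cases h23 : IsCoprime (3 * m + 2) N
  · have h13 : ¬ IsCoprime (3 * m + 1) N := fun h13 =>
      hdb.not_ge ((h.eq_three_of_isCoprime (hd.trans hdb) h13 h23).le.trans hd)
    have h13' : ¬ IsCoprime (3 * ((N : ℤ) - 1 - m) + 2) N := by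
      rw [show 3 * ((N : ℤ) - 1 - m) + 2 = -(3 * m + 1) + N * 3 by ring]
      exact fun hc => h13 (IsCoprime.neg_left_iff _ _ |>.1 (IsCoprime.of_add_mul_left_left hc))
    have hlt := sq_lt_of_two_thirds_not_isCoprime hN hω h.reflect h'.reflect hd hdb h13'
    rwa [show (b - k) * d - b * (d - l) = -(k * d - b * l) by ring, neg_sq] at hlt
  · exact sq_lt_of_two_thirds_not_isCoprime hN hω h h' hd hdb h23

end IsExposedAt

theorem northPole_notMem_disk {N : ℕ} (hN : 0 < N)
    (hω : N.primeFactors.card ≤ 3 ∨ (N.primeFactors.card = 4 ∧ Odd N)) {α β : ℚ}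
    (hα : α ∈ SSet N) (hβ : β ∈ SSet N) (hne : β ≠ α) : northPole α ∉ disk β := by
  obtain ⟨b, hb⟩ := exists_den_eq_mul_of_mem_cand hα.1
  obtain ⟨d, hd⟩ := exists_den_eq_mul_of_mem_cand hβ.1
  rw [northPole_mem_disk_iff hN hb hd]
  intro hpole
  obtain ⟨m, k, l, h, h', hd2, hdb, hpole'⟩ :=
    ((mem_SSet_iff_isExposed hN hb).1 hα).exists_isExposedAt_of_sq_add_sq_le
      ((mem_SSet_iff_isExposed hN hd).1 hβ) (mt (num_den_inj hN hb hd).2 hne) hpole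
  exact (h.sq_lt hN.ne' hω h' hd2 hdb).not_ge hpole'

section Overlap

variable {N : ℕ} {m : ℤ}

theorem exists_forall_prime_dvd (hN : N ≠ 0) (v : ℕ → ℤ × ℤ)
    (hv : ∀ p : ℕ, p.Prime → p ∣ N → ¬ (p : ℤ) ∣ (v p).2) :
    ∃ m : ℤ, 0 ≤ m ∧ m < N ∧ ∀ p : ℕ, p.Prime → p ∣ N → (p : ℤ) ∣ (v p).2 * m + (v p).1 := by
  have hroot (p : ℕ) : ∃ a : ℕ, p.Prime → p ∣ N → (p : ℤ) ∣ (v p).2 * a + (v p).1 := by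
    by_cases hp : p.Prime ∧ p ∣ N
    · obtain ⟨x, y, hxy⟩ :=
        (Nat.prime_iff_prime_int.1 hp.1).coprime_iff_not_dvd.2 (hv p hp.1 hp.2)
      have hp_ne : (p : ℤ) ≠ 0 := by exact_mod_cast hp.1.ne_zero
      refine ⟨((-(y * (v p).1)) % p).toNat, fun _ _ => ?_⟩
      rw [Int.toNat_of_nonneg (Int.emod_nonneg _ hp_ne), Int.emod_def]
      exact ⟨(v p).1 * x - (v p).2 * (-(y * (v p).1) / p), by linear_combination -(v p).1 * hxy⟩
    · exact ⟨0, fun hp_prime hpN => absurd ⟨hp_prime, hpN⟩ hp⟩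
  choose a ha using hroot
  obtain ⟨m, hm⟩ := Nat.chineseRemainderOfFinset a id N.primeFactors
    (fun p hp => (Nat.prime_of_mem_primeFactors hp).ne_zero)
    (fun p hp q hq => (Nat.coprime_primes (Nat.prime_of_mem_primeFactors hp)
      (Nat.prime_of_mem_primeFactors hq)).2)
  refine ⟨(m % N : ℕ), by positivity, by exact_mod_cast Nat.mod_lt m hN.bot_lt,
    fun p hp hpN => ?_⟩
  have hmod : m % N ≡ a p [MOD p] :=
    ((Nat.mod_modEq m N).of_dvd hpN).trans (hm p (Nat.mem_primeFactors.2 ⟨hp, hpN, hN⟩))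
  have hmod' : (v p).2 * (m % N : ℕ) + (v p).1 ≡ (v p).2 * a p + (v p).1 [ZMOD p] :=
    ((Int.natCast_modEq_iff.2 hmod).mul_left _).add_right _
  exact hmod'.dvd_iff.2 (ha p hp hpN)

/-- The numerators `d * m + l` of the fractions `m + l / d` share a factor with `N` for
`l / d = 0, 1, 1 / 2, 1 / 3, 2 / 3` but not for `l / d = 1 / 4, 2 / 5`: this makes the disks of the
last two fractions exposed, and the north pole of `m + 2 / 5` lies in the disk of `m + 1 / 4`. -/
structure IsOverlapConfig (N : ℕ) (m : ℤ) : Prop where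
  nonneg : 0 ≤ m
  lt : m < N
  zero : ¬ IsCoprime m N
  one : ¬ IsCoprime (m + 1) N
  half : ¬ IsCoprime (2 * m + 1) N
  third : ¬ IsCoprime (3 * m + 1) N
  two_thirds : ¬ IsCoprime (3 * m + 2) N
  quarter : IsCoprime (4 * m + 1) N
  two_fifths : IsCoprime (5 * m + 2) N

/-- The pairs `(l, d)` of the fractions `l / d` which an overlap configuration blocks. -/
def overlapBlocked : Finset (ℤ × ℤ) := {(0, 1), (1, 1), (1, 2), (1, 3), (2, 3)}

theorem IsOverlapConfig.of_forall_prime (hm : 0 ≤ m) (hmN : m < N)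
    (hblocked : ∀ v ∈ overlapBlocked, ∃ p : ℕ, p.Prime ∧ p ∣ N ∧ (p : ℤ) ∣ v.2 * m + v.1)
    (hcover : ∀ p : ℕ, p.Prime → p ∣ N → ∃ v ∈ overlapBlocked, (p : ℤ) ∣ v.2 * m + v.1)
    (h2 : 2 ∣ N → ¬ 2 ∣ m) (h3 : 3 ∣ N → ¬ 3 ∣ m + 1) (h5 : 5 ∣ N → ¬ 5 ∣ 4 * m + 1) :
    IsOverlapConfig N m := by
  have not_isCoprime {l d : ℤ} (hv : (l, d) ∈ overlapBlocked) :
      ¬ IsCoprime (d * m + l) N := fun hc =>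
    let ⟨_, hp, hpN, hpv⟩ := hblocked _ hv
    not_dvd_of_dvd_of_isCoprime hp hc hpv (Int.natCast_dvd_natCast.2 hpN)
  exact {
    nonneg := hm
    lt := hmN
    zero := by simpa using not_isCoprime (l := 0) (d := 1) (by decide)
    one := by simpa using not_isCoprime (l := 1) (d := 1) (by decide)
    half := not_isCoprime (by decide)
    third := not_isCoprime (by decide)
    two_thirds := not_isCoprime (by decide)
    quarter := isCoprime_of_abs_le_five hcover (by decide) (by omega) (by omega) h5
    two_fifths := isCoprime_of_abs_le_four hcover (by decide) (by omega) (by omega) }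

theorem exists_distinct_primeFactors
    (hω : ¬ (N.primeFactors.card ≤ 3 ∨ (N.primeFactors.card = 4 ∧ Odd N))) :
    ∃ p ∈ N.primeFactors, ∃ q ∈ N.primeFactors, ∃ r ∈ N.primeFactors, ∃ s ∈ N.primeFactors,
      ∃ t ∈ N.primeFactors, (p ≠ 3 ∧ p ≠ 5) ∧ q ≠ p ∧ (r ≠ p ∧ r ≠ q ∧ r ≠ 3) ∧
      (s ≠ p ∧ s ≠ q ∧ s ≠ 3) ∧ (t ≠ p ∧ t ≠ q ∧ t ≠ r ∧ t ≠ s) ∧ (s = r → r = 2) ∧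
      (2 ∣ N → r = 2) := by
  have exists_notMem (u : Finset ℕ) (hu : u.card < N.primeFactors.card) :
      ∃ x ∈ N.primeFactors, x ∉ u := Finset.exists_mem_notMem_of_card_lt_card hu
  push Not at hω
  by_cases h2 : 2 ∣ N
  · have hN : N ≠ 0 := by
      rintro rfl
      simp at hω
    have h2_mem : 2 ∈ N.primeFactors := Nat.mem_primeFactors.2 ⟨Nat.prime_two, h2, hN⟩
    obtain ⟨p, hp, hp'⟩ := exists_notMem {2, 3, 5} (Finset.card_le_three.trans_lt (by omega))
    obtain ⟨q, hq, hq'⟩ := exists_notMem {2, p} (Finset.card_le_two.trans_lt (by omega))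
    obtain ⟨t, ht, ht'⟩ := exists_notMem {2, p, q} (Finset.card_le_three.trans_lt (by omega))
    simp only [Finset.mem_insert, Finset.mem_singleton, not_or] at hp' hq' ht'
    exact ⟨p, hp, q, hq, 2, h2_mem, 2, h2_mem, t, ht, by omega⟩
  · have hcard : 5 ≤ N.primeFactors.card := by
      have hne : N.primeFactors.card ≠ 4 := fun h =>
        hω.2 h (Nat.not_even_iff_odd.1 (mt even_iff_two_dvd.1 h2))
      omega
    obtain ⟨p, hp, hp'⟩ := exists_notMem {3, 5} (Finset.card_le_two.trans_lt (by omega))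
    obtain ⟨r, hr, hr'⟩ := exists_notMem {3, p} (Finset.card_le_two.trans_lt (by omega))
    obtain ⟨s, hs, hs'⟩ := exists_notMem {3, p, r} (Finset.card_le_three.trans_lt (by omega))
    obtain ⟨q, hq, hq'⟩ := exists_notMem {p, r, s} (Finset.card_le_three.trans_lt (by omega))
    obtain ⟨t, ht, ht'⟩ := exists_notMem {p, q, r, s} (Finset.card_le_four.trans_lt (by omega))
    simp only [Finset.mem_insert, Finset.mem_singleton, not_or] at hp' hq' hr' hs' ht'
    exact ⟨p, hp, q, hq, r, hr, s, hs, t, ht, by omega⟩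

/-- The pair `(l, d)` such that the prime `x` is made to divide `d * m + l`: the primes `p`, `q`,
`r` and `s` block `2 / 3`, `0`, `1` and `1 / 3`, and all other primes block `1 / 2`. -/
def overlapLabel (p q r s x : ℕ) : ℤ × ℤ :=
  if x = p then (2, 3) else if x = q then (0, 1) else if x = r then (1, 1) else
    if x = s then (1, 3) else (1, 2)

theorem overlapLabel_mem (p q r s x : ℕ) : overlapLabel p q r s x ∈ overlapBlocked := by
  unfold overlapLabel
  split_ifs <;> decide

theorem not_dvd_overlapLabel_snd {p q r s x : ℕ} (hx : x.Prime) (hp3 : p ≠ 3) (hs3 : s ≠ 3)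
    (h2r : x = 2 → r = 2) : ¬ (x : ℤ) ∣ (overlapLabel p q r s x).2 := by
  have hx3 : (x : ℤ) ∣ 3 → x = 3 := fun h =>
    (Nat.prime_dvd_prime_iff_eq hx Nat.prime_three).1 (by exact_mod_cast h)
  have hx2 : (x : ℤ) ∣ 2 → x = 2 := fun h =>
    (Nat.prime_dvd_prime_iff_eq hx Nat.prime_two).1 (by exact_mod_cast h)
  have hx1 : ¬ (x : ℤ) ∣ 1 := (Nat.prime_iff_prime_int.1 hx).not_dvd_one
  intro hdvd
  unfold overlapLabel at hdvd
  split_ifs at hdvd with hxp hxq hxr hxs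
  · exact hp3 (hxp ▸ hx3 hdvd)
  · exact hx1 hdvd
  · exact hx1 hdvd
  · exact hs3 (hxs ▸ hx3 hdvd)
  · exact hxr ((hx2 hdvd).trans (h2r (hx2 hdvd)).symm)

theorem exists_isOverlapConfig (hN : N ≠ 0)
    (hω : ¬ (N.primeFactors.card ≤ 3 ∨ (N.primeFactors.card = 4 ∧ Odd N))) :
    ∃ m, IsOverlapConfig N m := by
  obtain ⟨p, hp, q, hq, r, hr, s, hs, t, ht, ⟨hp3, hp5⟩, hqp, ⟨hrp, hrq, hr3⟩, ⟨hsp, hsq, hs3⟩,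
    ⟨htp, htq, htr, hts⟩, hsr, h2r⟩ := exists_distinct_primeFactors hω
  obtain ⟨m, hm, hmN, hdvd⟩ := exists_forall_prime_dvd hN (overlapLabel p q r s)
    fun x hx hxN => not_dvd_overlapLabel_snd hx hp3 hs3 fun hx2 => h2r (hx2 ▸ hxN)
  have exists_dvd {x : ℕ} (hx : x ∈ N.primeFactors) {l d : ℤ}
      (hxv : overlapLabel p q r s x = (l, d)) :
      ∃ x : ℕ, x.Prime ∧ x ∣ N ∧ (x : ℤ) ∣ d * m + l :=
    have hx := Nat.mem_primeFactors.1 hx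
    ⟨x, hx.1, hx.2.1, by simpa only [hxv] using hdvd x hx.1 hx.2.1⟩
  have hthird : ∃ x : ℕ, x.Prime ∧ x ∣ N ∧ (x : ℤ) ∣ 3 * m + 1 := by
    by_cases heq : s = r
    · have hdvd2 := hdvd r (Nat.prime_of_mem_primeFactors hr) (Nat.dvd_of_mem_primeFactors hr)
      simp only [overlapLabel, if_neg hrp, if_neg hrq, if_true] at hdvd2
      rw [hsr heq] at hdvd2 hr
      exact ⟨2, Nat.prime_two, Nat.dvd_of_mem_primeFactors hr, by omega⟩
    · exact exists_dvd hs (by simp [overlapLabel, hsp, hsq, heq])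
  refine ⟨m, .of_forall_prime hm hmN ?_
    (fun x hx hxN => ⟨_, overlapLabel_mem p q r s x, hdvd x hx hxN⟩) ?_ ?_ ?_⟩
  · simp only [overlapBlocked, Finset.forall_mem_insert, Finset.mem_singleton, forall_eq]
    exact ⟨exists_dvd hq (by simp [overlapLabel, hqp]),
      exists_dvd hr (by simp [overlapLabel, hrp, hrq]),
      exists_dvd ht (by simp [overlapLabel, htp, htq, htr, hts]), hthird,
      exists_dvd hp (by simp [overlapLabel])⟩
  · intro h2N h2m
    obtain rfl := h2r h2N
    have hdvd2 := hdvd 2 Nat.prime_two h2N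
    simp only [overlapLabel, if_neg hrp, if_neg hrq, if_true] at hdvd2
    omega
  · intro h3N h3m
    have hdvd3 := hdvd 3 Nat.prime_three h3N
    simp only [overlapLabel, if_neg hp3.symm, if_neg hr3.symm, if_neg hs3.symm] at hdvd3
    split_ifs at hdvd3 <;> omega
  · intro h5N h5m
    have hdvd5 := hdvd 5 Nat.prime_five h5N
    simp only [overlapLabel, if_neg hp5.symm] at hdvd5
    split_ifs at hdvd5 <;> omega

theorem eq_of_sq_add_sq_le_sq_sixty_five {l d : ℤ} (hd : 0 < d)
    (h : (31 * d - 65 * l) ^ 2 + (12 * d) ^ 2 ≤ 65 ^ 2) :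
    (l = 0 ∧ d = 1) ∨ (l = 1 ∧ d = 1) ∨ (l = 1 ∧ d = 2) ∨ (l = 1 ∧ d = 3) ∨ (l = 2 ∧ d = 3) ∨
      (l = 2 ∧ d = 4) ∨ (l = 2 ∧ d = 5) := by
  have hd5 : d ≤ 5 := by nlinarith
  have hl : |31 * d - 65 * l| ≤ 65 := abs_le_of_sq_le_sq (by nlinarith) (by norm_num)
  obtain ⟨hlo, hhi⟩ := abs_le.1 hl
  have hl0 : 0 ≤ l := by omega
  have hl3 : l ≤ 3 := by omega
  interval_cases d <;> interval_cases l <;> omega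

theorem eq_of_sq_add_sq_le_sq_four {l d : ℤ} (hd : 0 < d) (h : (d - 4 * l) ^ 2 + d ^ 2 ≤ 4 ^ 2) :
    (l = 0 ∧ d = 1) ∨ (l = 1 ∧ d = 1) ∨ (l = 0 ∧ d = 2) ∨ (l = 1 ∧ d = 2) ∨ (l = 1 ∧ d = 3) ∨
      (l = 1 ∧ d = 4) := by
  have hd4 : d ≤ 4 := by nlinarith
  have hl : |d - 4 * l| ≤ 4 := abs_le_of_sq_le_sq (by nlinarith) (by norm_num)
  obtain ⟨hlo, hhi⟩ := abs_le.1 hl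
  have hl0 : 0 ≤ l := by omega
  have hl2 : l ≤ 2 := by omega
  interval_cases d <;> interval_cases l <;> omega

namespace IsOverlapConfig

theorem isExposed_two_fifths (h : IsOverlapConfig N m) : IsExposed N (5 * m + 2) 5 := by
  have := h.nonneg
  have := h.lt
  -- The witness lies on the circle of `2 / 5`, by the Pythagorean triple `(5, 12, 13)`.
  refine ⟨⟨by norm_num, by omega, by omega,
    h.two_fifths.mul_right (IsCoprime.mul_add_left_left (by norm_num) m)⟩,
    ⟨((65 * m + 31 : ℤ) / (65 : ℤ) : ℝ), ((12 : ℤ) / (65 : ℤ) : ℝ)⟩, ?_, fun c d hcd hmem => ?_⟩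
  · rw [mk_div_mem_fracDisk_iff (by norm_num) (by norm_num)]
    ring_nf
    norm_num
  · obtain ⟨l, rfl⟩ : ∃ l, c = d * m + l := ⟨c - d * m, by ring⟩
    rw [mk_div_mem_fracDisk_iff hcd.den_pos (by norm_num),
      show (65 * m + 31) * d - 65 * (d * m + l) = 31 * d - 65 * l by ring] at hmem
    have hcop := hcd.isCoprime
    have hcopN : IsCoprime (d * m + l) N := hcop.of_mul_right_left
    have hcopd : IsCoprime l d := IsCoprime.of_mul_add_left_left hcop.of_mul_right_right
    rcases eq_of_sq_add_sq_le_sq_sixty_five hcd.den_pos hmem with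
      ⟨rfl, rfl⟩ | ⟨rfl, rfl⟩ | ⟨rfl, rfl⟩ | ⟨rfl, rfl⟩ | ⟨rfl, rfl⟩ | ⟨rfl, rfl⟩ | ⟨rfl, rfl⟩
    · exact absurd (by simpa using hcopN) h.zero
    · exact absurd (by simpa using hcopN) h.one
    · exact absurd hcopN h.half
    · exact absurd hcopN h.third
    · exact absurd hcopN h.two_thirds
    · exact absurd hcopd (by norm_num)
    · exact ⟨rfl, rfl⟩

theorem isExposed_quarter (h : IsOverlapConfig N m) : IsExposed N (4 * m + 1) 4 := by
  have := h.nonneg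
  have := h.lt
  refine ⟨⟨by norm_num, by omega, by omega,
    h.quarter.mul_right (IsCoprime.mul_add_left_left isCoprime_one_left m)⟩,
    ⟨((4 * m + 1 : ℤ) / (4 : ℤ) : ℝ), ((1 : ℤ) / (4 : ℤ) : ℝ)⟩, ?_, fun c d hcd hmem => ?_⟩
  · rw [mk_div_mem_fracDisk_iff (by norm_num) (by norm_num)]
    ring_nf
    norm_num
  · obtain ⟨l, rfl⟩ : ∃ l, c = d * m + l := ⟨c - d * m, by ring⟩
    rw [mk_div_mem_fracDisk_iff hcd.den_pos (by norm_num),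
      show (4 * m + 1) * d - 4 * (d * m + l) = d - 4 * l by ring, one_mul] at hmem
    have hcop := hcd.isCoprime
    have hcopN : IsCoprime (d * m + l) N := hcop.of_mul_right_left
    have hcopd : IsCoprime l d := IsCoprime.of_mul_add_left_left hcop.of_mul_right_right
    rcases eq_of_sq_add_sq_le_sq_four hcd.den_pos hmem with
      ⟨rfl, rfl⟩ | ⟨rfl, rfl⟩ | ⟨rfl, rfl⟩ | ⟨rfl, rfl⟩ | ⟨rfl, rfl⟩ | ⟨rfl, rfl⟩
    · exact absurd (by simpa using hcopN) h.zero
    · exact absurd (by simpa using hcopN) h.one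
    · exact absurd hcopd (by norm_num [isCoprime_zero_left])
    · exact absurd hcopN h.half
    · exact absurd hcopN h.third
    · exact ⟨rfl, rfl⟩

theorem exists_northPole_mem_disk (hN : 0 < N) (h : IsOverlapConfig N m) :
    ∃ α ∈ SSet N, ∃ β ∈ SSet N, β ≠ α ∧ northPole α ∈ disk β := by
  obtain ⟨α, hα, hαd⟩ := h.isExposed_two_fifths.1.exists_num_den hN
  obtain ⟨β, hβ, hβd⟩ := h.isExposed_quarter.1.exists_num_den hN
  refine ⟨α, (mem_SSet_iff_isExposed hN hαd).2 (hα ▸ h.isExposed_two_fifths), β,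
    (mem_SSet_iff_isExposed hN hβd).2 (hβ ▸ h.isExposed_quarter), fun heq => ?_, ?_⟩
  · have := ((num_den_inj hN hαd hβd).1 heq).2
    omega
  · rw [northPole_mem_disk_iff hN hαd hβd, hα, hβ]
    ring_nf
    norm_num

end IsOverlapConfig

end Overlap

/-- Zagier-type classification: for `N > 1`, `c(N) = 0` iff `N` has at most three
distinct prime factors, or `N` is odd with exactly four distinct prime factors. -/
theorem complexity_eq_zero_iff (N : ℕ) (hN : 1 < N) :
    cN N = 0 ↔ N.primeFactors.card ≤ 3 ∨ (N.primeFactors.card = 4 ∧ Odd N) := by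
  have hN₀ : 0 < N := by omega
  rw [cN_eq_zero_iff_forall_northPole_notMem hN₀]
  constructor
  · intro hdisjoint
    by_contra hω
    obtain ⟨m, hm⟩ := exists_isOverlapConfig hN₀.ne' hω
    obtain ⟨α, hα, β, hβ, hne, hpole⟩ := hm.exists_northPole_mem_disk hN₀
    exact hdisjoint α hα β hβ hne hpole
  · exact fun hω α hα β hβ hne => northPole_notMem_disk hN₀ hω hα hβ hne

end

end Paper
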